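/- Let (A,m) be a commutative Noetherian local ring. For bounded complexes X, Y of finitely generated A-modules whose cohomology has finite length, the module Hom_{D^b(A)}(X, Y) of morphisms in the bounded derived category has finite length as an A-module. Consequently D^b_f(A) is Hom-finite. -/

import Mathlib

set_option maxHeartbeats 1000000

open CategoryTheory Limits

variable (A : Type) [CommRing A] [HasDerivedCategory.{0} (ModuleCat.{0} A)]

/-- The natural `A`-module structure on morphisms in the derived category of `A`-modules,
with `r • f = f ≫ Q.map (r • 𝟙 Y)`. -/
noncomputable def derivedHomModule (X Y : CochainComplex (ModuleCat.{0} A) ℤ) :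
    Module A (DerivedCategory.Q.obj X ⟶ DerivedCategory.Q.obj Y) where
  smul r f := f ≫ DerivedCategory.Q.map (r • 𝟙 Y)
  one_smul f := by
    show f ≫ DerivedCategory.Q.map ((1 : A) • 𝟙 Y) = f
    rw [one_smul, CategoryTheory.Functor.map_id, Category.comp_id]
  mul_smul r s f := by
    have h : (s • 𝟙 Y) ≫ (r • 𝟙 Y) = (r * s) • 𝟙 Y := by
      rw [Linear.smul_comp, Linear.comp_smul, Category.comp_id, smul_smul, mul_comm]
    show f ≫ DerivedCategory.Q.map ((r * s) • 𝟙 Y) =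
      (f ≫ DerivedCategory.Q.map (s • 𝟙 Y)) ≫ DerivedCategory.Q.map (r • 𝟙 Y)
    rw [← h, CategoryTheory.Functor.map_comp, ← Category.assoc]
  smul_zero r := by
    show (0 : DerivedCategory.Q.obj X ⟶ DerivedCategory.Q.obj Y) ≫
        DerivedCategory.Q.map (r • 𝟙 Y) = 0
    rw [Limits.zero_comp]
  smul_add r f g := by
    show (f + g) ≫ DerivedCategory.Q.map (r • 𝟙 Y) =
      f ≫ DerivedCategory.Q.map (r • 𝟙 Y) + g ≫ DerivedCategory.Q.map (r • 𝟙 Y)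
    rw [Preadditive.add_comp]
  add_smul r s f := by
    show f ≫ DerivedCategory.Q.map ((r + s) • 𝟙 Y) =
      f ≫ DerivedCategory.Q.map (r • 𝟙 Y) + f ≫ DerivedCategory.Q.map (s • 𝟙 Y)
    rw [add_smul, CategoryTheory.Functor.map_add, Preadditive.comp_add]
  zero_smul f := by
    show f ≫ DerivedCategory.Q.map ((0 : A) • 𝟙 Y) = 0
    rw [zero_smul, CategoryTheory.Functor.map_zero, Limits.comp_zero]

open CategoryTheory Limits Pretriangulated DerivedCategory Abelian

section helpers

lemma ifl_of_exact {R M N P : Type*} [CommRing R] [AddCommGroup M] [AddCommGroup N]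
    [AddCommGroup P] [Module R M] [Module R N] [Module R P] (f : M →ₗ[R] N) (g : N →ₗ[R] P)
    (h : Function.Exact f g) (hM : IsFiniteLength R M) (hP : IsFiniteLength R P) :
    IsFiniteLength R N := by
  rw [isFiniteLength_iff_isNoetherian_isArtinian] at hM hP ⊢
  obtain ⟨_, _⟩ := hM
  obtain ⟨_, _⟩ := hP
  have hr : LinearMap.range f = LinearMap.ker g := h.linearMap_ker_eq.symm
  exact ⟨isNoetherian_of_range_eq_ker f g hr, isArtinian_of_range_eq_ker f g hr⟩

lemma ifl_ext (R : Type) [CommRing R] [IsNoetherianRing R] (N M : ModuleCat.{0} R)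
    (hN : Module.Finite R N) (hM : IsFiniteLength R M) (i : ℕ) :
    IsFiniteLength R (Ext.{0} N M i) := by
  induction i generalizing N with
  | zero =>
    obtain ⟨n, f, hf⟩ := Module.Finite.exists_fin' R N
    have hpi : IsFiniteLength R ((Fin n → R) →ₗ[R] M) := by
      refine IsFiniteLength.of_injective (N := Fin n → M) (f :=
        ((LinearMap.lsum R (fun _ : Fin n => R) R).symm.trans
          (LinearEquiv.piCongrRight fun _ => LinearMap.ringLmapEquivSelf R R M)).toLinearMap) ?_
        (LinearEquiv.injective _)
      rw [isFiniteLength_iff_isNoetherian_isArtinian] at hM ⊢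
      obtain ⟨_, _⟩ := hM
      exact ⟨inferInstance, inferInstance⟩
    have h2 : IsFiniteLength R (N →ₗ[R] M) :=
      hpi.of_injective (f := LinearMap.lcomp R M f) (LinearMap.lcomp_injective_of_surjective f hf)
    exact (Ext.linearEquiv₀.trans ModuleCat.homLinearEquiv).symm.isFiniteLength h2
  | succ n ih =>
    obtain ⟨N', _, _, _, _, f, surjf⟩ := Module.exists_finite_presentation R N
    let exac := LinearMap.shortExact_shortComplexKer surjf
    exact IsFiniteLength.of_surjective (ih _ inferInstance)
      (f := exac.extClass.precompOfLinear R M (add_comm 1 n))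
      (precomp_extClass_surjective_of_projective_X₂ M exac n)

universe w v u

lemma der_devissage {C : Type u} [Category.{v} C] [Abelian C] [HasDerivedCategory.{w} C]
    (P : ObjectProperty (DerivedCategory C)) (W : ObjectProperty C)
    [P.IsClosedUnderIsomorphisms] [W.IsClosedUnderIsomorphisms]
    (hext : ∀ T ∈ distTriang (DerivedCategory C), P T.obj₁ → P T.obj₃ → P T.obj₂)
    (hW0 : ∀ Z, IsZero Z → W Z)
    (hs : ∀ (n : ℤ) (M : C), W M → P ((singleFunctor C n).obj M))
    (k : ℕ) : ∀ (a : ℤ) (Z : DerivedCategory C) [Z.IsGE a] [Z.IsLE (a + k)]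
    (_ : ∀ i, W ((homologyFunctor C i).obj Z)), P Z := by
  induction k with
  | zero =>
    intro a Z _ hle hW
    have : Z.IsLE a := by simpa using hle
    obtain ⟨M, ⟨e⟩⟩ := exists_iso_singleFunctor_obj_of_isGE_of_isLE Z a
    refine P.prop_of_iso e.symm (hs a M ?_)
    refine W.prop_of_iso ((homologyFunctor C a).mapIso e ≪≫ ?_) (hW a)
    exact (homologyFunctorFactors C a).app _ ≪≫
      (HomologicalComplex.homologyFunctorSingleIso C (ComplexShape.up ℤ) a).app M
  | succ k ih =>
    intro a Z _ hle hW
    obtain ⟨X, Y, hX, hY, f, g, h, hT⟩ := TStructure.t.exists_triangle Z a (a + 1) rfl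
    have hX : X.IsLE a := ⟨hX⟩
    have hY : Y.IsGE (a + 1) := ⟨hY⟩
    have i1 (i : ℤ) (hi : i ≤ a) :
        Nonempty ((homologyFunctor C i).obj X ≅ (homologyFunctor C i).obj Z) := by
      have h1 : Epi ((homologyFunctor C i).map f) :=
        (HomologySequence.epi_homologyMap_mor₁_iff _ hT i).2
          ((isZero_of_isGE Y (a + 1) i (by lia)).eq_of_tgt _ _)
      have h2 : Mono ((homologyFunctor C i).map f) :=
        (HomologySequence.mono_homologyMap_mor₁_iff _ hT (i - 1) i (by lia)).2
          ((isZero_of_isGE Y (a + 1) (i - 1) (by lia)).eq_of_src _ _)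
      have := isIso_of_mono_of_epi ((homologyFunctor C i).map f)
      exact ⟨asIso ((homologyFunctor C i).map f)⟩
    have i2 (i : ℤ) (hi : a + 1 ≤ i) :
        Nonempty ((homologyFunctor C i).obj Z ≅ (homologyFunctor C i).obj Y) := by
      have h1 : Epi ((homologyFunctor C i).map g) :=
        (HomologySequence.epi_homologyMap_mor₂_iff _ hT i (i + 1) rfl).2
          ((isZero_of_isLE X a (i + 1) (by lia)).eq_of_tgt _ _)
      have h2 : Mono ((homologyFunctor C i).map g) :=
        (HomologySequence.mono_homologyMap_mor₂_iff _ hT i).2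
          ((isZero_of_isLE X a i (by lia)).eq_of_src _ _)
      have := isIso_of_mono_of_epi ((homologyFunctor C i).map g)
      exact ⟨asIso ((homologyFunctor C i).map g)⟩
    refine hext _ hT ?_ ?_
    · have : X.IsGE a := by
        rw [isGE_iff]
        intro i hi
        exact (isZero_of_isGE Z a i hi).of_iso (i1 i hi.le).some
      have : X.IsLE (a + k) := TStructure.t.isLE_of_le X a (a + k) (by lia)
      refine ih a X fun i => ?_
      by_cases hi : i ≤ a
      · exact W.prop_of_iso (i1 i hi).some.symm (hW i)
      · exact hW0 _ (isZero_of_isLE X a i (by lia))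
    · have : Y.IsLE (a + 1 + k) := by
        rw [isLE_iff]
        intro i hi
        exact (isZero_of_isLE Z (a + (k + 1 : ℕ)) i (by push_cast; lia)).of_iso
          (i2 i (by lia)).some.symm
      refine ih (a + 1) Y fun i => ?_
      by_cases hi : a + 1 ≤ i
      · exact W.prop_of_iso (i2 i hi).some (hW i)
      · exact hW0 _ (isZero_of_isGE Y (a + 1) i (by lia))

variable (R : Type) [CommRing R] [HasDerivedCategory.{0} (ModuleCat.{0} R)]

lemma ifl_single [IsNoetherianRing R] (M N : ModuleCat.{0} R) (hM : Module.Finite R M)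
    (hN : IsFiniteLength R N) (m n : ℤ) :
    IsFiniteLength R ((singleFunctor _ m).obj M ⟶ (singleFunctor _ n).obj N) := by
  by_cases hmn : m < n
  · have : Subsingleton ((singleFunctor _ m).obj M ⟶ (singleFunctor _ n).obj N) :=
      ⟨fun f g => by rw [TStructure.t.zero f m n hmn, TStructure.t.zero g m n hmn]⟩
    exact .of_subsingleton
  · obtain ⟨k, hk⟩ := Int.eq_ofNat_of_zero_le (show 0 ≤ m - n by lia)
    have h := (Ext.homLinearEquiv (R := R) (X := M) (Y := N) (n := k)).isFiniteLength
      (ifl_ext R M N hM hN k)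
    let S := singleFunctors (ModuleCat.{0} R)
    have e1 : ((singleFunctor _ m).obj M)⟦m⟧ ≅ (singleFunctor _ 0).obj M :=
      (S.shiftIso m 0 m (by lia)).app M
    have e2 : ((singleFunctor _ n).obj N)⟦m⟧ ≅ ((singleFunctor _ 0).obj N)⟦(k : ℤ)⟧ :=
      (S.shiftIso m (n - m) n (by lia)).app N ≪≫
        ((S.shiftIso (k : ℤ) (n - m) 0 (by lia)).app N).symm
    have h' := (Linear.homCongr R e1 e2).symm.isFiniteLength h
    exact h'.of_injective (f := (shiftFunctor (DerivedCategory (ModuleCat.{0} R)) m).mapLinearMap R)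
      (Functor.map_injective _)

lemma ifl_tri1 {D : Type*} [Category D] [HasZeroObject D] [HasShift D ℤ] [Preadditive D]
    [∀ n : ℤ, (shiftFunctor D n).Additive] [Pretriangulated D] [Linear R D]
    (T : Triangle D) (hT : T ∈ distTriang D) (Z : D)
    (h1 : IsFiniteLength R (T.obj₁ ⟶ Z)) (h3 : IsFiniteLength R (T.obj₃ ⟶ Z)) :
    IsFiniteLength R (T.obj₂ ⟶ Z) := by
  refine ifl_of_exact (Linear.leftComp R Z T.mor₂) (Linear.leftComp R Z T.mor₁) ?_ h3 h1
  intro f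
  constructor
  · intro hf
    obtain ⟨g, hg⟩ := Triangle.yoneda_exact₂ T hT f hf
    exact ⟨g, hg.symm⟩
  · rintro ⟨g, rfl⟩
    simp [comp_distTriang_mor_zero₁₂_assoc _ hT]

lemma ifl_tri2 {D : Type*} [Category D] [HasZeroObject D] [HasShift D ℤ] [Preadditive D]
    [∀ n : ℤ, (shiftFunctor D n).Additive] [Pretriangulated D] [Linear R D]
    (T : Triangle D) (hT : T ∈ distTriang D) (Z : D)
    (h1 : IsFiniteLength R (Z ⟶ T.obj₁)) (h3 : IsFiniteLength R (Z ⟶ T.obj₃)) :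
    IsFiniteLength R (Z ⟶ T.obj₂) := by
  refine ifl_of_exact (Linear.rightComp R Z T.mor₁) (Linear.rightComp R Z T.mor₂) ?_ h1 h3
  intro f
  constructor
  · intro hf
    obtain ⟨g, hg⟩ := Triangle.coyoneda_exact₂ T hT f hf
    exact ⟨g, hg.symm⟩
  · rintro ⟨g, rfl⟩
    simp [comp_distTriang_mor_zero₁₂ _ hT]

def finProp : ObjectProperty (ModuleCat.{0} R) := fun M => Module.Finite R M

def flProp : ObjectProperty (ModuleCat.{0} R) := fun M => IsFiniteLength R M

instance : (finProp R).IsClosedUnderIsomorphisms :=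
  ⟨fun e (h : Module.Finite _ _) => Module.Finite.equiv e.toLinearEquiv⟩

instance : (flProp R).IsClosedUnderIsomorphisms :=
  ⟨fun e (h : IsFiniteLength _ _) => e.toLinearEquiv.isFiniteLength h⟩

def homFromProp (Y : DerivedCategory (ModuleCat.{0} R)) :
    ObjectProperty (DerivedCategory (ModuleCat.{0} R)) := fun X => IsFiniteLength R (X ⟶ Y)

def homToProp (X : DerivedCategory (ModuleCat.{0} R)) :
    ObjectProperty (DerivedCategory (ModuleCat.{0} R)) := fun Y => IsFiniteLength R (X ⟶ Y)

instance (Y) : (homFromProp R Y).IsClosedUnderIsomorphisms :=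
  ⟨fun e (h : IsFiniteLength _ _) => (Linear.homCongr R e (Iso.refl _)).isFiniteLength h⟩

instance (Y) : (homToProp R Y).IsClosedUnderIsomorphisms :=
  ⟨fun e (h : IsFiniteLength _ _) => (Linear.homCongr R (Iso.refl _) e).isFiniteLength h⟩

lemma bdd_ge_le {R : Type} [CommRing R] [HasDerivedCategory.{0} (ModuleCat.{0} R)]
    (X : CochainComplex (ModuleCat.{0} R) ℤ)
    (h : ∃ a b : ℤ, ∀ i : ℤ, (i < a ∨ b < i) → IsZero (X.X i)) :
    ∃ (a : ℤ) (k : ℕ), (Q.obj X).IsGE a ∧ (Q.obj X).IsLE (a + k) := by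
  obtain ⟨a, b, h⟩ := h
  have hz (i : ℤ) (hi : i < a ∨ b < i) : IsZero ((homologyFunctor _ i).obj (Q.obj X)) := by
    refine IsZero.of_iso ?_ ((homologyFunctorFactors _ i).app X)
    exact ((HomologicalComplex.exactAt_iff_isZero_homology _ _).1
      (ShortComplex.exact_of_isZero_X₂ _ (h i hi)))
  refine ⟨a, (b - a).toNat, ?_, ?_⟩
  · rw [isGE_iff]
    exact fun i hi => hz i (Or.inl hi)
  · rw [isLE_iff]
    exact fun i hi => hz i (Or.inr (by lia))

lemma isl_main [IsNoetherianRing R] (X Y : DerivedCategory (ModuleCat.{0} R))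
    (hX : ∃ (a : ℤ) (k : ℕ), X.IsGE a ∧ X.IsLE (a + k))
    (hY : ∃ (a : ℤ) (k : ℕ), Y.IsGE a ∧ Y.IsLE (a + k))
    (hX' : ∀ i, Module.Finite R ((homologyFunctor (ModuleCat.{0} R) i).obj X))
    (hY' : ∀ i, IsFiniteLength R ((homologyFunctor (ModuleCat.{0} R) i).obj Y)) :
    IsFiniteLength R (X ⟶ Y) := by
  obtain ⟨a, k, _, _⟩ := hX
  obtain ⟨b, l, _, _⟩ := hY
  refine der_devissage (homFromProp R Y) (finProp R)
    (fun T hT h1 h3 => ifl_tri1 R T hT Y h1 h3) (fun Z hZ => ?_) (fun m M hM => ?_) k a X hX'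
  · have : Subsingleton Z := ModuleCat.subsingleton_of_isZero hZ
    exact (inferInstance : Module.Finite R Z)
  · refine der_devissage (homToProp R _) (flProp R)
      (fun T hT h1 h3 => ifl_tri2 R T hT _ h1 h3) (fun Z hZ => ?_)
      (fun n N hN => ifl_single R M N hM hN m n) l b Y hY'
    have : Subsingleton Z := ModuleCat.subsingleton_of_isZero hZ
    exact IsFiniteLength.of_subsingleton

end helpers

/-- over a commutative Noetherian local ring `A`, for bounded complexes
`X`, `Y` of finitely generated `A`-modules with finite length cohomology, the module of
morphisms `Hom_{D^b(A)}(X, Y)` in the derived category has finite length as an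
`A`-module; hence `D^b_f(A)` is Hom-finite. -/
theorem derived_category_hom_finite
    [IsNoetherianRing A] [IsLocalRing A]
    (X Y : CochainComplex (ModuleCat.{0} A) ℤ)
    (hbddX : ∃ a b : ℤ, ∀ i : ℤ, (i < a ∨ b < i) → IsZero (X.X i))
    (hbddY : ∃ a b : ℤ, ∀ i : ℤ, (i < a ∨ b < i) → IsZero (Y.X i))
    (hfgX : ∀ i : ℤ, Module.Finite A (X.X i))
    (hfgY : ∀ i : ℤ, Module.Finite A (Y.X i))
    (hflX : ∀ i : ℤ, IsFiniteLength A (X.homology i))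
    (hflY : ∀ i : ℤ, IsFiniteLength A (Y.homology i)) :
    letI := derivedHomModule A X Y
    IsFiniteLength A (DerivedCategory.Q.obj X ⟶ DerivedCategory.Q.obj Y) := by
  have hmod : derivedHomModule A X Y = (inferInstance : Module A (Q.obj X ⟶ Q.obj Y)) := by
    refine Module.ext' _ _ fun r f => ?_
    change f ≫ Q.map (r • 𝟙 Y) = r • f
    rw [CategoryTheory.Functor.map_smul, CategoryTheory.Functor.map_id, Linear.comp_smul, Category.comp_id]
  rw [hmod]
  refine isl_main A _ _ (bdd_ge_le X hbddX) (bdd_ge_le Y hbddY) (fun i => ?_) (fun i => ?_)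
  · have hf : Module.Finite A (X.homology i) := by
      have h := hflX i
      rw [isFiniteLength_iff_isNoetherian_isArtinian] at h
      have := h.1
      infer_instance
    exact (finProp A).prop_of_iso ((homologyFunctorFactors _ i).app X).symm hf
  · exact ((homologyFunctorFactors _ i).app Y).symm.toLinearEquiv.isFiniteLength (hflY i)
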